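/- arXiv:math/0405226 — 2 statements merged into one kernel-verified Lean document; each statement's English description precedes it below -/
import Mathlib

section
/- Let F : 𝔞 ⥤ 𝔟 be an additive, full, essentially surjective functor between preadditive categories with nilpotent kernel ideal. If 𝔟 is additive (has a zero object and binary biproducts), then 𝔞 is additive. -/
/-!
Since `F` has nilpotent kernel ideal, every endomorphism killed by `F` is a nilpotent element of
its endomorphism ring. Two consequences carry the proof: an endomorphism sent to an identity is
invertible (`isIso_of_map_eq_id`), and an idempotent killed by `F` vanishes
(`eq_zero_of_idem_of_map_eq_zero`).

A preimage of the zero object of `𝔟` has its identity killed by `F`, so it is a zero object.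

For biproducts, choose an object `P` lying over `F X ⊞ F Y` and lift the four structure morphisms
to `i₁, i₂, p₁, p₂`. The biproduct identities hold only modulo the kernel ideal, and are made exact
one at a time without changing the images under `F`: rescale `p₁` by the inverse of `i₁ ≫ p₁`,
project `i₂` away from `i₁` along `p₁`, rescale `i₂` by the inverse of `i₂ ≫ p₂`, and finally
restrict `p₂` to the complement of `i₁`. The defect `𝟙 - (p₁ ≫ i₁ + p₂ ≫ i₂)` is then an idempotent
killed by `F`, hence zero.
-/

open CategoryTheory CategoryTheory.Limits

universe v₁ v₂ u₁ u₂

/-- `KerCompPow F n f` holds if `f` is a composite of `n` morphisms each of which is sent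
to zero by `F`. -/
inductive KerCompPow {A : Type u₁} [Category.{v₁} A] {B : Type u₂} [Category.{v₂} B]
    [Preadditive A] [Preadditive B] (F : A ⥤ B) :
    ℕ → ∀ {X Y : A}, (X ⟶ Y) → Prop
  | single {X Y : A} (f : X ⟶ Y) (hf : F.map f = 0) : KerCompPow F 1 f
  | comp {n : ℕ} {X Y Z : A} (f : X ⟶ Y) (g : Y ⟶ Z) (hf : KerCompPow F n f)
      (hg : F.map g = 0) : KerCompPow F (n + 1) (f ≫ g)

/-- A functor `F : 𝔞 ⥤ 𝔟` between preadditive categories has nilpotent kernel ideal if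
there is `n ≥ 1` such that every composite of `n` morphisms killed by `F` is zero. -/
def HasNilpotentKernelIdeal {A : Type u₁} [Category.{v₁} A] {B : Type u₂} [Category.{v₂} B]
    [Preadditive A] [Preadditive B] (F : A ⥤ B) : Prop :=
  ∃ n : ℕ, 0 < n ∧ ∀ {X Y : A} (f : X ⟶ Y), KerCompPow F n f → f = 0

section Helpers

variable {A : Type u₁} [Category.{v₁} A] {B : Type u₂} [Category.{v₂} B]
  [Preadditive A] [Preadditive B] {F : A ⥤ B}

theorem kerCompPow_pow {X : A} (f : End X) (hf : F.map f = 0) (n : ℕ) :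
    KerCompPow F (n + 1) (f ^ (n + 1) : End X) := by
  induction n with
  | zero => simpa using KerCompPow.single f hf
  | succ n ih =>
    rw [pow_succ' f (n + 1)]
    exact KerCompPow.comp _ _ ih hf

theorem isNilpotent_of_map_eq_zero (hnil : HasNilpotentKernelIdeal F) {X : A} (f : End X)
    (hf : F.map f = 0) : IsNilpotent f := by
  obtain ⟨n, hn, h⟩ := hnil
  obtain ⟨m, rfl⟩ := Nat.exists_eq_add_of_lt hn
  rw [Nat.zero_add] at h
  exact ⟨m + 1, h _ (kerCompPow_pow f hf m)⟩

theorem isIso_of_map_eq_id [F.Additive] (hnil : HasNilpotentKernelIdeal F) {X : A} (u : End X)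
    (hu : F.map u = 𝟙 _) : IsIso u := by
  have h : IsNilpotent (1 - u) := by
    refine isNilpotent_of_map_eq_zero hnil _ ?_
    change F.map (𝟙 X - (show X ⟶ X from u)) = 0
    rw [F.map_sub, hu, F.map_id, sub_self]
  have h' := h.isUnit_one_sub
  rw [sub_sub_cancel] at h'
  exact (isUnit_iff_isIso u).1 h'

theorem eq_zero_of_idem_of_map_eq_zero (hnil : HasNilpotentKernelIdeal F) {X : A} (e : End X)
    (he : e ≫ e = e) (h : F.map e = 0) : e = 0 := by
  have hi : IsIdempotentElem e := he
  obtain ⟨n, hn⟩ := isNilpotent_of_map_eq_zero hnil e h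
  have h' : e ^ (n + 1) = 0 := by rw [pow_succ, hn, zero_mul]
  rwa [hi.pow_succ_eq] at h'

/-- Morphisms of `𝔞` whose images under `F` satisfy the biproduct identities can be corrected,
by elements of the kernel ideal, to satisfy these identities in `𝔞`. -/
theorem hasBinaryBiproduct_of_map [F.Additive] (hnil : HasNilpotentKernelIdeal F) {X Y P : A}
    (i₁ : X ⟶ P) (i₂ : Y ⟶ P) (p₁ : P ⟶ X) (p₂ : P ⟶ Y)
    (h₁₁ : F.map i₁ ≫ F.map p₁ = 𝟙 _) (h₁₂ : F.map i₁ ≫ F.map p₂ = 0)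
    (h₂₁ : F.map i₂ ≫ F.map p₁ = 0) (h₂₂ : F.map i₂ ≫ F.map p₂ = 𝟙 _)
    (ht : F.map p₁ ≫ F.map i₁ + F.map p₂ ≫ F.map i₂ = 𝟙 _) :
    HasBinaryBiproduct X Y := by
  obtain ⟨q₁, hq₁, e₁₁⟩ : ∃ q₁ : P ⟶ X, F.map q₁ = F.map p₁ ∧ i₁ ≫ q₁ = 𝟙 X := by
    have hu : F.map (i₁ ≫ p₁) = 𝟙 _ := by rw [F.map_comp, h₁₁]
    have := isIso_of_map_eq_id hnil _ hu
    refine ⟨p₁ ≫ inv (i₁ ≫ p₁), ?_, ?_⟩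
    · simp only [F.map_comp, F.map_inv, h₁₁, IsIso.inv_id, Category.comp_id]
    · rw [← Category.assoc, IsIso.hom_inv_id]
  obtain ⟨j₂, hj₂, e₂₁, e₂₂⟩ : ∃ j₂ : Y ⟶ P, F.map j₂ = F.map i₂ ∧ j₂ ≫ q₁ = 0 ∧
      j₂ ≫ p₂ = 𝟙 Y := by
    let k := i₂ - i₂ ≫ q₁ ≫ i₁
    have hk : F.map k = F.map i₂ := by
      simp only [k, F.map_sub, F.map_comp, hq₁, reassoc_of% h₂₁, zero_comp, sub_zero]
    have hk₁ : k ≫ q₁ = 0 := by simp [k, e₁₁]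
    have hu : F.map (k ≫ p₂) = 𝟙 _ := by rw [F.map_comp, hk, h₂₂]
    have := isIso_of_map_eq_id hnil _ hu
    refine ⟨inv (k ≫ p₂) ≫ k, ?_, ?_, ?_⟩
    · simp only [F.map_comp, F.map_inv, hk, h₂₂, IsIso.inv_id, Category.id_comp]
    · rw [Category.assoc, hk₁, comp_zero]
    · rw [Category.assoc, IsIso.inv_hom_id]
  obtain ⟨q₂, hq₂, e₁₂, e₂₂'⟩ : ∃ q₂ : P ⟶ Y, F.map q₂ = F.map p₂ ∧ i₁ ≫ q₂ = 0 ∧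
      j₂ ≫ q₂ = 𝟙 Y := by
    refine ⟨p₂ - q₁ ≫ i₁ ≫ p₂, ?_, ?_, ?_⟩
    · simp only [F.map_sub, F.map_comp, h₁₂, comp_zero, sub_zero]
    · simp [reassoc_of% e₁₁]
    · simp [reassoc_of% e₂₁, e₂₂]
  have total : 𝟙 P - (q₁ ≫ i₁ + q₂ ≫ j₂) = 0 := by
    refine eq_zero_of_idem_of_map_eq_zero hnil _ ?_ ?_
    · simp [reassoc_of% e₁₁, reassoc_of% e₁₂, reassoc_of% e₂₁, reassoc_of% e₂₂']
    · simp only [F.map_sub, F.map_add, F.map_comp, F.map_id, hq₁, hq₂, hj₂, ht, sub_self]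
  exact hasBinaryBiproduct_of_total
    { pt := P, fst := q₁, snd := q₂, inl := i₁, inr := j₂,
      inl_fst := e₁₁, inl_snd := e₁₂, inr_fst := e₂₁, inr_snd := e₂₂' }
    (sub_eq_zero.1 total).symm

end Helpers

/-- Let `F : 𝔞 ⥤ 𝔟` be an additive, full, essentially surjective functor between
preadditive categories with nilpotent kernel ideal.  If `𝔟` is additive (it has a zero
object and binary biproducts), then so is `𝔞`. -/
theorem additive_of_nilpotent_kernel_ideal
    {A : Type u₁} [Category.{v₁} A] {B : Type u₂} [Category.{v₂} B]
    [Preadditive A] [Preadditive B]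
    (F : A ⥤ B) [F.Additive] [F.Full] [F.EssSurj]
    (hnil : HasNilpotentKernelIdeal F)
    (hz : HasZeroObject B) (hb : HasBinaryBiproducts B) :
    HasZeroObject A ∧ HasBinaryBiproducts A := by
  constructor
  · obtain ⟨Z, hZ⟩ := hz
    have h0 : IsZero (F.obj (F.objPreimage Z)) := hZ.of_iso (F.objObjPreimageIso Z)
    exact ⟨_, (IsZero.iff_id_eq_zero _).2 (eq_zero_of_idem_of_map_eq_zero hnil _
      (Category.comp_id _) (h0.eq_of_src _ _))⟩
  · refine ⟨fun X Y => ?_⟩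
    let φ := F.objObjPreimageIso (F.obj X ⊞ F.obj Y)
    obtain ⟨i₁, hi₁⟩ := F.map_surjective (biprod.inl ≫ φ.inv)
    obtain ⟨i₂, hi₂⟩ := F.map_surjective (biprod.inr ≫ φ.inv)
    obtain ⟨p₁, hp₁⟩ := F.map_surjective (φ.hom ≫ biprod.fst)
    obtain ⟨p₂, hp₂⟩ := F.map_surjective (φ.hom ≫ biprod.snd)
    refine hasBinaryBiproduct_of_map hnil i₁ i₂ p₁ p₂ ?_ ?_ ?_ ?_ ?_
    · simp [hi₁, hp₁]
    · simp [hi₁, hp₂]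
    · simp [hi₂, hp₁]
    · simp [hi₂, hp₂]
    · have h : φ.hom ≫ (biprod.fst ≫ biprod.inl + biprod.snd ≫ biprod.inr) ≫ φ.inv = 𝟙 _ := by
        rw [biprod.total, Category.id_comp, φ.hom_inv_id]
      rw [hi₁, hi₂, hp₁, hp₂, ← h]
      simp only [Preadditive.add_comp, Preadditive.comp_add, Category.assoc]
end

section
/- Let F : 𝔞 ⥤ 𝔟 be an additive, full, essentially surjective functor between preadditive categories with nilpotent kernel ideal. Then F induces a bijection between the isomorphism classes of objects of 𝔞 and the isomorphism classes of objects of 𝔟; in particular, for objects A, A' of 𝔞, A ≅ A' in 𝔞 if and only if F(A) ≅ F(A') in 𝔟. -/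
/-!
Since a composite of `n` endomorphisms killed by `F` vanishes, an endomorphism `r` with
`F.map r = 0` is nilpotent in the ring `End X`, hence `𝟙 X + r` is a unit. So every endomorphism
that `F` sends to the identity is invertible (`isIso_of_map_eq_id`). Lifting an inverse of
`F.map f` along the full functor `F` gives a `g` for which `f ≫ g` and `g ≫ f` are of this kind,
so `f` is invertible: `F` reflects isomorphisms (`reflectsIsomorphisms_of_nilpotent`). A full
functor that reflects isomorphisms is injective on isomorphism classes, and essential surjectivity
is surjectivity on them.
-/

open CategoryTheory CategoryTheory.Limits

universe v₁ v₂ u₁ u₂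

/-- The map induced by a functor `F` on isomorphism classes of objects (skeletons). -/
def skeletonMap {A : Type u₁} [Category.{v₁} A] {B : Type u₂} [Category.{v₂} B]
    (F : A ⥤ B) :
    Quotient (CategoryTheory.isIsomorphicSetoid A) →
      Quotient (CategoryTheory.isIsomorphicSetoid B) :=
  Quotient.map' F.obj fun _ _ h => h.elim fun e => ⟨F.mapIso e⟩

lemma kerCompPow_pow_s19 {A : Type u₁} [Category.{v₁} A] {B : Type u₂} [Category.{v₂} B]
    [Preadditive A] [Preadditive B] (F : A ⥤ B) {X : A} (r : End X)
    (hr : F.map r = 0) (n : ℕ) : KerCompPow F (n + 1) (r ^ (n + 1) : End X) := by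
  induction n with
  | zero => simpa using KerCompPow.single r hr
  | succ n ih =>
    -- `pow_succ'` fits because multiplication in `End X` is composition in reverse order.
    rw [pow_succ']
    exact KerCompPow.comp _ r ih hr

lemma isIso_of_map_eq_id_s19 {A : Type u₁} [Category.{v₁} A] {B : Type u₂} [Category.{v₂} B]
    [Preadditive A] [Preadditive B] (F : A ⥤ B) [F.Additive]
    (hnil : HasNilpotentKernelIdeal F) {X : A} (f : X ⟶ X) (hf : F.map f = 𝟙 _) :
    IsIso f := by
  obtain ⟨n, hn, h⟩ := hnil
  obtain ⟨m, rfl⟩ : ∃ m, n = m + 1 := ⟨n - 1, by omega⟩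
  let r : End X := f - 𝟙 X
  have hr : F.map r = 0 := by simp [r, F.map_sub, hf]
  have hu : IsUnit (1 + r) :=
    IsNilpotent.isUnit_one_add ⟨m + 1, h _ (kerCompPow_pow_s19 F r hr m)⟩
  have hfr : (1 + r : End X) = f := add_sub_cancel (𝟙 X) f
  rw [hfr] at hu
  exact (isUnit_iff_isIso f).1 hu

lemma reflectsIsomorphisms_of_nilpotent {A : Type u₁} [Category.{v₁} A] {B : Type u₂}
    [Category.{v₂} B] [Preadditive A] [Preadditive B] (F : A ⥤ B) [F.Additive] [F.Full]
    (hnil : HasNilpotentKernelIdeal F) : F.ReflectsIsomorphisms where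
  reflects {X Y} f _ := by
    let g : Y ⟶ X := F.preimage (inv (F.map f))
    have h₁ : IsIso (f ≫ g) := isIso_of_map_eq_id_s19 F hnil _ (by simp [g])
    have h₂ : IsIso (g ≫ f) := isIso_of_map_eq_id_s19 F hnil _ (by simp [g])
    have : IsSplitMono f := IsSplitMono.mk' ⟨g ≫ inv (f ≫ g), by
      rw [← Category.assoc, IsIso.hom_inv_id]⟩
    have : IsSplitEpi f := IsSplitEpi.mk' ⟨inv (g ≫ f) ≫ g, by
      rw [Category.assoc, IsIso.inv_hom_id]⟩
    exact isIso_of_mono_of_isSplitEpi f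

/-- Let `F : 𝔞 ⥤ 𝔟` be an additive, full, essentially surjective functor between
preadditive categories with nilpotent kernel ideal.  Then `F` induces a bijection between
the isomorphism classes of objects of `𝔞` and those of `𝔟`; in particular `A ≅ A'` in `𝔞`
if and only if `F(A) ≅ F(A')` in `𝔟`. -/
theorem skeletonMap_bijective_of_nilpotent_kernel_ideal
    {A : Type u₁} [Category.{v₁} A] {B : Type u₂} [Category.{v₂} B]
    [Preadditive A] [Preadditive B]
    (F : A ⥤ B) [F.Additive] [F.Full] [F.EssSurj]
    (hnil : HasNilpotentKernelIdeal F) :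
    Function.Bijective (skeletonMap F) ∧
      ∀ A₁ A₂ : A, (Nonempty (A₁ ≅ A₂) ↔ Nonempty (F.obj A₁ ≅ F.obj A₂)) := by
  have hrefl : F.ReflectsIsomorphisms := reflectsIsomorphisms_of_nilpotent F hnil
  have key : ∀ A₁ A₂ : A, Nonempty (F.obj A₁ ≅ F.obj A₂) → Nonempty (A₁ ≅ A₂) := by
    rintro A₁ A₂ ⟨e⟩
    have : IsIso (F.map (F.preimage e.hom)) := by rw [F.map_preimage]; infer_instance
    have := isIso_of_reflects_iso (F.preimage e.hom) F
    exact ⟨asIso (F.preimage e.hom)⟩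
  refine ⟨⟨?_, ?_⟩, fun A₁ A₂ => ⟨fun ⟨e⟩ => ⟨F.mapIso e⟩, key A₁ A₂⟩⟩
  · rintro ⟨A₁⟩ ⟨A₂⟩ h
    exact Quotient.sound (key A₁ A₂ (Quotient.exact h))
  · rintro ⟨Y⟩
    exact ⟨Quotient.mk _ (F.objPreimage Y), Quotient.sound ⟨F.objObjPreimageIso Y⟩⟩
end
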